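/- Let κ ∈ ℝ with κ ≠ 0, let μ ∈ ℝ with μ ≠ 0 and μ ≠ κ + 1, and let S = {(x¹,x²) ∈ ℝ² : x¹ + x² > 0}. If a smooth function h : S → ℝ satisfies the system ∂₁²h = (κ/(x¹+x²)) ∂₁h, ∂₂²h = (κ/(x¹+x²)) ∂₂h, ∂₁∂₂h = μκ h/(x¹+x²)² on S, then h = 0. (Equivalently, E_κ(μ) = {0} for μ ∉ {0, κ+1}.) -/

import Mathlib

/-!
Write `s = x¹ + x²`, `a = ∂₁h`, `b = ∂₂h`. Equating `∂₂(∂₁a)` with `∂₁(∂₂a)`, where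
`∂₁a = κa/s` and `∂₂a = μκh/s²`, turns the second order system into the first order relation
`(1 + μ) s a = μ(κ + 2) h` (`first_order`); by symmetry the same holds for `b`.
Differentiating the relation for `a` in both directions and substituting the relations back in
gives `(1 + μ) κ μ (μ - κ - 1) h = 0`, so `h = 0` if `μ ≠ -1`. If `μ = -1`, the relation itself
reads `(κ + 2) h = 0`, and `κ + 2 = κ + 1 - μ ≠ 0`. All equations are kept in the multiplied-out
form `s f = k g`, which `pd_relation` differentiates.
-/

open scoped ContDiff

/-- Partial derivative `∂_i f` in coordinates on `ℝⁿ`. -/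
noncomputable def pd {n : ℕ} (i : Fin n) (f : (Fin n → ℝ) → ℝ) : (Fin n → ℝ) → ℝ :=
  fun x => fderiv ℝ f x (Pi.single i 1)

/-- Hessian `(Hess_h)_{ij} = ∂_i∂_j h − Σ_k Γ_{ij}^k ∂_k h` of `h` w.r.t. the connection `Γ`. -/
noncomputable def hessD {n : ℕ} (Γ : Fin n → Fin n → Fin n → (Fin n → ℝ) → ℝ)
    (h : (Fin n → ℝ) → ℝ) (i j : Fin n) : (Fin n → ℝ) → ℝ :=
  fun x => pd i (pd j h) x - ∑ k, Γ i j k x * pd k h x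

/-- Ricci tensor
`ρ_{ij} = Σ_k (∂_k Γ_{ij}^k − ∂_i Γ_{kj}^k) + Σ_{k,l} (Γ_{kl}^k Γ_{ij}^l − Γ_{il}^k Γ_{kj}^l)`. -/
noncomputable def ricciD {n : ℕ} (Γ : Fin n → Fin n → Fin n → (Fin n → ℝ) → ℝ)
    (i j : Fin n) : (Fin n → ℝ) → ℝ :=
  fun x => (∑ k, (pd k (Γ i j k) x - pd i (Γ k j k) x))
    + ∑ k, ∑ l, (Γ k l k x * Γ i j l x - Γ i l k x * Γ k j l x)

/-- Symmetrized Ricci tensor `(ρ_s)_{ij} = (ρ_{ij} + ρ_{ji})/2`. -/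
noncomputable def ricciSymD {n : ℕ} (Γ : Fin n → Fin n → Fin n → (Fin n → ℝ) → ℝ)
    (i j : Fin n) : (Fin n → ℝ) → ℝ :=
  fun x => (ricciD Γ i j x + ricciD Γ j i x) / 2

/-- The half plane `x¹ + x² > 0`. -/
def halfPlane : Set (Fin 2 → ℝ) := {y : Fin 2 → ℝ | 0 < y 0 + y 1}

lemma isOpen_halfPlane : IsOpen halfPlane :=
  isOpen_lt continuous_const (by fun_prop)

lemma contDiffOn_pd {f : (Fin 2 → ℝ) → ℝ} (hf : ContDiffOn ℝ ∞ f halfPlane) (i : Fin 2) :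
    ContDiffOn ℝ ∞ (pd i f) halfPlane :=
  (hf.fderiv_of_isOpen isOpen_halfPlane (by simp)).clm_apply contDiffOn_const

lemma differentiableAt_of_mem {f : (Fin 2 → ℝ) → ℝ} (hf : ContDiffOn ℝ ∞ f halfPlane)
    {x : Fin 2 → ℝ} (hx : x ∈ halfPlane) : DifferentiableAt ℝ f x :=
  (hf.contDiffAt (isOpen_halfPlane.mem_nhds hx)).differentiableAt (by simp)

lemma pd_congr {f g : (Fin 2 → ℝ) → ℝ} (hfg : ∀ y ∈ halfPlane, f y = g y)
    {x : Fin 2 → ℝ} (hx : x ∈ halfPlane) (i : Fin 2) : pd i f x = pd i g x := by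
  have : f =ᶠ[nhds x] g := Filter.eventuallyEq_of_mem (isOpen_halfPlane.mem_nhds hx) hfg
  simp only [pd, this.fderiv_eq]

lemma pd_const_mul {f : (Fin 2 → ℝ) → ℝ} (hf : ContDiffOn ℝ ∞ f halfPlane) (k : ℝ)
    {x : Fin 2 → ℝ} (hx : x ∈ halfPlane) (i : Fin 2) :
    pd i (fun y => k * f y) x = k * pd i f x := by
  simp [pd, fderiv_const_mul (differentiableAt_of_mem hf hx)]

lemma pd_comm {f : (Fin 2 → ℝ) → ℝ} (hf : ContDiffOn ℝ ∞ f halfPlane)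
    {x : Fin 2 → ℝ} (hx : x ∈ halfPlane) (i j : Fin 2) :
    pd i (pd j f) x = pd j (pd i f) x := by
  have hc : ContDiffAt ℝ ∞ f x := hf.contDiffAt (isOpen_halfPlane.mem_nhds hx)
  have hd : DifferentiableAt ℝ (fderiv ℝ f) x :=
    (hc.fderiv_right (m := ∞) (by simp)).differentiableAt (by simp)
  have key (k l : Fin 2) : pd k (pd l f) x
      = fderiv ℝ (fderiv ℝ f) x (Pi.single k 1) (Pi.single l 1) := by
    unfold pd
    rw [fderiv_clm_apply hd (differentiableAt_const _)]
    simp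
  rw [key, key]
  exact hc.isSymmSndFDerivAt (by simpa using WithTop.coe_le_coe.2 (le_top (a := (2 : ℕ∞)))) _ _

/-- The derivative of an identity `(x¹ + x²) f = k g` in either coordinate direction. -/
lemma pd_relation {f g : (Fin 2 → ℝ) → ℝ} {k : ℝ} (hf : ContDiffOn ℝ ∞ f halfPlane)
    (hg : ContDiffOn ℝ ∞ g halfPlane)
    (hfg : ∀ y ∈ halfPlane, (y 0 + y 1) * f y = k * g y)
    {x : Fin 2 → ℝ} (hx : x ∈ halfPlane) (i : Fin 2) :
    f x + (x 0 + x 1) * pd i f x = k * pd i g x := by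
  have h1 := pd_congr hfg hx i
  have hs : HasFDerivAt (fun y : Fin 2 → ℝ => y 0 + y 1)
      (ContinuousLinearMap.proj (R := ℝ) (φ := fun _ : Fin 2 => ℝ) 0
        + ContinuousLinearMap.proj (R := ℝ) (φ := fun _ : Fin 2 => ℝ) 1) x :=
    (hasFDerivAt_apply 0 x).add (hasFDerivAt_apply 1 x)
  have hF := (hs.mul (differentiableAt_of_mem hf hx).hasFDerivAt).fderiv
  have hG := ((differentiableAt_of_mem hg hx).hasFDerivAt.const_mul k).fderiv
  unfold pd at h1 ⊢
  erw [hF, hG] at h1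
  fin_cases i <;> simp at h1 ⊢ <;> linarith

/-- The integrability condition of the system. The indices `i ≠ j` are the two directions in either
order; only `∂ᵢ²h` and one mixed derivative enter. -/
lemma first_order {κ μ : ℝ} {h : (Fin 2 → ℝ) → ℝ} (hκ : κ ≠ 0)
    (hh : ContDiffOn ℝ ∞ h halfPlane) (i j : Fin 2)
    (h2 : ∀ y ∈ halfPlane, (y 0 + y 1) * pd i (pd i h) y = κ * pd i h y)
    (h11 : ∀ y ∈ halfPlane,
      (y 0 + y 1) * ((y 0 + y 1) * pd i (pd j h) y) = μ * κ * h y)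
    {x : Fin 2 → ℝ} (hx : x ∈ halfPlane) :
    (x 0 + x 1) * ((1 + μ) * pd i h x) = μ * (κ + 2) * h x := by
  have hi := contDiffOn_pd hh i
  have hij := contDiffOn_pd (contDiffOn_pd hh j) i
  have hd : ContDiffOn ℝ ∞ (fun y => (y 0 + y 1) * pd i (pd j h) y) halfPlane :=
    ContDiffOn.mul (by fun_prop) hij
  have e1 := pd_relation (contDiffOn_pd hi i) hi h2 hx j
  have e2 := pd_relation (k := 1) hij hd (fun y _ => (one_mul _).symm) hx i
  have e3 := pd_relation hd hh h11 hx i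
  have e4 : pd j (pd i (pd i h)) x = pd i (pd i (pd j h)) x := by
    rw [pd_comm hi hx j i]
    exact pd_congr (fun y hy => pd_comm hh hy j i) hx i
  rw [e4, pd_comm hh hx j i] at e1
  have e5 := h2 x hx
  have e6 := h11 x hx
  have hs : x 0 + x 1 ≠ 0 := ne_of_gt hx
  apply mul_left_cancel₀ hκ
  generalize pd i (pd i (pd j h)) x = T at *
  generalize pd i (pd j h) x = c at *
  generalize pd i (pd i h) x = A at *
  generalize pd i (fun y => (y 0 + y 1) * pd i (pd j h) y) x = D at *
  generalize pd i h x = a at *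
  generalize x 0 + x 1 = s at *
  linear_combination s ^ 2 * e1 - s ^ 2 * e2 - s * e3 - s * e5 + (κ + 2) * e6

/-- for `κ ≠ 0` and `μ ∉ {0, κ+1}`, the only smooth function on
`S = {x¹ + x² > 0}` satisfying `∂₁²h = (κ/(x¹+x²)) ∂₁h`, `∂₂²h = (κ/(x¹+x²)) ∂₂h`,
`∂₁∂₂h = μκ h/(x¹+x²)²` is `h = 0`; i.e. `E_κ(μ) = {0}`. -/
theorem statement14 (κ : ℝ) (hκ : κ ≠ 0) (μ : ℝ) (hμ : μ ≠ 0) (hμ2 : μ ≠ κ + 1)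
    (h : (Fin 2 → ℝ) → ℝ)
    (hh : ContDiffOn ℝ ∞ h {y : Fin 2 → ℝ | 0 < y 0 + y 1})
    (heq : ∀ x ∈ {y : Fin 2 → ℝ | 0 < y 0 + y 1},
      pd 0 (pd 0 h) x = κ / (x 0 + x 1) * pd 0 h x ∧
      pd 1 (pd 1 h) x = κ / (x 0 + x 1) * pd 1 h x ∧
      pd 0 (pd 1 h) x = μ * κ * h x / (x 0 + x 1) ^ 2) :
    ∀ x ∈ {y : Fin 2 → ℝ | 0 < y 0 + y 1}, h x = 0 := by
  have hS : ∀ y ∈ halfPlane, y 0 + y 1 ≠ 0 := fun y hy => ne_of_gt hy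
  have hh' : ContDiffOn ℝ ∞ h halfPlane := hh
  have h00 : ∀ y ∈ halfPlane, (y 0 + y 1) * pd 0 (pd 0 h) y = κ * pd 0 h y := fun y hy => by
    have := hS y hy
    rw [(heq y hy).1]; field_simp
  have h11 : ∀ y ∈ halfPlane, (y 0 + y 1) * pd 1 (pd 1 h) y = κ * pd 1 h y := fun y hy => by
    have := hS y hy
    rw [(heq y hy).2.1]; field_simp
  have h01 : ∀ y ∈ halfPlane,
      (y 0 + y 1) * ((y 0 + y 1) * pd 0 (pd 1 h) y) = μ * κ * h y := fun y hy => by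
    have := hS y hy
    rw [(heq y hy).2.2]; field_simp
  have h10 : ∀ y ∈ halfPlane,
      (y 0 + y 1) * ((y 0 + y 1) * pd 1 (pd 0 h) y) = μ * κ * h y := fun y hy => by
    rw [pd_comm hh' hy 1 0]; exact h01 y hy
  intro x hx
  have ra := fun y (hy : y ∈ halfPlane) => first_order hκ hh' 0 1 h00 h01 hy
  have rb := first_order hκ hh' 1 0 h11 h10 hx
  have ha := contDiffOn_pd hh' 0
  have hma : ContDiffOn ℝ ∞ (fun y => (1 + μ) * pd 0 h y) halfPlane := contDiffOn_const.mul ha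
  have d0 := pd_relation hma hh' ra hx 0
  have d1 := pd_relation hma hh' ra hx 1
  rw [pd_const_mul ha _ hx] at d0 d1
  have e0 := h00 x hx
  have e1 := h10 x hx
  have rx := ra x hx
  have hs := hS x hx
  by_cases hm : 1 + μ = 0
  · have hk : κ + 2 ≠ 0 := fun hk => hμ2 (by linarith)
    have : μ * (κ + 2) * h x = 0 := by rw [← rx, hm]; ring
    simpa [hμ, hk] using this
  · have hk : μ - κ - 1 ≠ 0 := fun hk => hμ2 (by linarith)
    -- The `∂₁`-derivative of the relation for `a`, reduced to a multiple of `h`.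
    have f0 : (1 + κ) * (μ * (κ + 2)) * ((1 + μ) * h x) = (μ * (κ + 2)) ^ 2 * h x := by
      linear_combination (x 0 + x 1) * (1 + μ) * d0 - (x 0 + x 1) * (1 + μ) ^ 2 * e0
        + (μ * (κ + 2) - (1 + μ) * (1 + κ)) * rx
    -- The `∂₂`-derivative of the same relation, also reduced to a multiple of `h`.
    have f1 : (1 + μ) * (μ * (κ + 2)) * h x + (1 + μ) ^ 2 * (μ * κ) * h x
        = (μ * (κ + 2)) ^ 2 * h x := by
      linear_combination (x 0 + x 1) * (1 + μ) * d1 - (1 + μ) ^ 2 * e1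
        - (1 + μ) * rx + μ * (κ + 2) * rb
    have : (1 + μ) * κ * μ * (μ - κ - 1) * h x = 0 := by linear_combination f1 - f0
    simpa [hm, hκ, hμ, hk] using this
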